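/- The formal language of stratified well-formed formulae of set theory is not context-free. -/

import Mathlib

/-- Alphabet of the usual syntax of set theory. -/
inductive Alph : Type
  | lb | rb | imp | all | deq | mem | w | prime | bot
deriving DecidableEq

/-- Well-formed formulae of set theory; variables are naturals (number of primes). -/
inductive Fm : Type
  | bot : Fm
  | eq : ℕ → ℕ → Fm
  | mem : ℕ → ℕ → Fm
  | imp : Fm → Fm → Fm
  | all : ℕ → Fm → Fm
deriving DecidableEq

/-- The string `w'^n` for the variable with `n` primes. -/
def varStr (n : ℕ) : List Alph := Alph.w :: List.replicate n Alph.prime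

/-- The string of symbols of a formula. -/
def Fm.str : Fm → List Alph
  | .bot => [Alph.bot]
  | .eq x y => varStr x ++ [Alph.deq] ++ varStr y
  | .mem x y => varStr x ++ [Alph.mem] ++ varStr y
  | .imp φ ψ => [Alph.lb] ++ φ.str ++ [Alph.imp] ++ ψ.str ++ [Alph.rb]
  | .all x φ => [Alph.lb, Alph.all] ++ varStr x ++ [Alph.rb] ++ φ.str

/-- Pairs `(x, y)` such that `x ∈ y` occurs as an atomic subformula. -/
def Fm.memPairs : Fm → Finset (ℕ × ℕ)
  | .bot => ∅
  | .eq _ _ => ∅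
  | .mem x y => {(x, y)}
  | .imp φ ψ => φ.memPairs ∪ ψ.memPairs
  | .all _ φ => φ.memPairs

/-- Pairs `(x, y)` such that `x ≐ y` occurs as an atomic subformula. -/
def Fm.eqPairs : Fm → Finset (ℕ × ℕ)
  | .bot => ∅
  | .eq x y => {(x, y)}
  | .mem _ _ => ∅
  | .imp φ ψ => φ.eqPairs ∪ ψ.eqPairs
  | .all _ φ => φ.eqPairs

/-- A formula is stratified if some integer assignment to variables satisfies
`σ x = σ y - 1` for subformulae `x ∈ y` and `σ x = σ y` for subformulae `x ≐ y`. -/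
def Fm.Stratified (φ : Fm) : Prop :=
  ∃ σ : ℕ → ℤ, (∀ p ∈ φ.memPairs, σ p.1 = σ p.2 - 1) ∧ (∀ p ∈ φ.eqPairs, σ p.1 = σ p.2)

/-!
In `[w ∈ a → [w ≐ c → w ∈ b]]`, where `a`, `b` and `c` also denote the numbers of primes of the
variables, stratification forces `c` to differ from both `a` and `b`. Take `c` large and
`a = b = c + c!`. Ogden's lemma in the form of Bader and Moura, with the primes of `c` marked and
everything that is not a prime excluded, pumps the primes of `c` together with those of at most
one of `a` and `b`. As `c` grows in steps of some `q ≤ c`, and `q ∣ c!`, it eventually reaches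
`c + c!` and collides with the variable that was left alone.
-/

section ParseTrees

variable {T α : Type*}

/-- `Yields g f s w`: the word `w` over `α`, read through `f : α → T`, is the yield of a forest of
complete parse trees of `g` whose roots spell the sentential form `s`. The letters of `α` refine
the terminals, so that positions of the yield can be told apart. -/
inductive Yields (g : ContextFreeGrammar T) (f : α → T) : List (Symbol T g.NT) → List α → Prop
  | nil : Yields g f [] []
  | terminal (a : α) {s : List (Symbol T g.NT)} {w : List α} (hs : Yields g f s w) :
      Yields g f (.terminal (f a) :: s) (a :: w)
  | nonterminal {r : ContextFreeRule T g.NT} (hr : r ∈ g.rules) {s : List (Symbol T g.NT)}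
      {u w : List α} (hu : Yields g f r.output u) (hs : Yields g f s w) :
      Yields g f (.nonterminal r.input :: s) (u ++ w)

namespace Yields

variable {g : ContextFreeGrammar T} {f : α → T} {s t : List (Symbol T g.NT)} {u v w : List α}

theorem append (hs : Yields g f s u) (ht : Yields g f t v) : Yields g f (s ++ t) (u ++ v) := by
  induction hs with
  | nil => exact ht
  | terminal a _ ih => exact .terminal a ih
  | nonterminal hr hu _ _ ih =>
    rw [List.append_assoc]
    exact .nonterminal hr hu ih

theorem exists_append_eq (h : Yields g f (s ++ t) w) :
    ∃ u v, u ++ v = w ∧ Yields g f s u ∧ Yields g f t v := by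
  induction s generalizing w with
  | nil => exact ⟨[], w, rfl, .nil, h⟩
  | cons _ s ih =>
    cases h with
    | terminal a hs =>
      obtain ⟨u, v, rfl, hu, hv⟩ := ih hs
      exact ⟨a :: u, v, rfl, .terminal a hu, hv⟩
    | nonterminal hr hx hs =>
      obtain ⟨u, v, rfl, hu, hv⟩ := ih hs
      exact ⟨_ ++ u, v, List.append_assoc .., .nonterminal hr hx hu, hv⟩

theorem of_rule {r : ContextFreeRule T g.NT} (hr : r ∈ g.rules) (h : Yields g f r.output w) :
    Yields g f [.nonterminal r.input] w := by
  simpa only [List.append_nil] using Yields.nonterminal hr h .nil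

theorem of_produces (h : g.Produces s t) (ht : Yields g f t w) : Yields g f s w := by
  obtain ⟨r, hr, hst⟩ := h
  obtain ⟨p, q, rfl, rfl⟩ := hst.exists_parts
  obtain ⟨_, _, rfl, hpr, hq⟩ := ht.exists_append_eq
  obtain ⟨_, _, rfl, hp, hout⟩ := hpr.exists_append_eq
  exact (hp.append (of_rule hr hout)).append hq

theorem derives (h : Yields g f s w) : g.Derives s (w.map fun a ↦ .terminal (f a)) := by
  induction h with
  | nil => exact .refl _
  | terminal a _ ih => exact ih.append_left [_]
  | @nonterminal r hr s u w _ _ ihu ihs =>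
    have hstep : g.Produces [.nonterminal r.input] r.output := ⟨r, hr, .input_output⟩
    rw [List.map_append]
    exact ((hstep.trans_derives ihu).append_right s).trans (ihs.append_left _)

theorem of_derives (h : g.Derives s (w.map fun a ↦ .terminal (f a))) : Yields g f s w := by
  induction h using Relation.ReflTransGen.head_induction_on with
  | refl =>
    induction w with
    | nil => exact .nil
    | cons a w ih => exact .terminal a ih
  | head hst _ ih => exact of_produces hst ih

theorem iff_map_mem_language :
    Yields g f [.nonterminal g.initial] w ↔ w.map f ∈ g.language := by
  rw [ContextFreeGrammar.mem_language_iff, List.map_map]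
  exact ⟨derives, of_derives⟩

end Yields

/-- `HasSubtree g f s w B x`: some forest with roots `s` and yield `w` has a subtree with root `B`
and yield `x`. The surrounding forest is recorded by what it is used for: every other tree with
root `B` can be grafted in place of the subtree. -/
def HasSubtree (g : ContextFreeGrammar T) (f : α → T) (s : List (Symbol T g.NT)) (w : List α)
    (B : g.NT) (x : List α) : Prop :=
  Yields g f [.nonterminal B] x ∧ ∃ u z, w = u ++ x ++ z ∧
    ∀ x', Yields g f [.nonterminal B] x' → Yields g f s (u ++ x' ++ z)

namespace HasSubtree

variable {g : ContextFreeGrammar T} {f : α → T} {s : List (Symbol T g.NT)} {u w x y : List α}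
  {A B : g.NT}

theorem refl (h : Yields g f [.nonterminal A] w) : HasSubtree g f [.nonterminal A] w A w :=
  ⟨h, [], [], by simp, by simp⟩

theorem trans (hA : HasSubtree g f s w A x) (hB : HasSubtree g f [.nonterminal A] x B y) :
    HasSubtree g f s w B y := by
  obtain ⟨-, u, z, rfl, hs⟩ := hA
  obtain ⟨hy, u', z', rfl, hx⟩ := hB
  exact ⟨hy, u ++ u', z' ++ z, by simp, fun y' hy' ↦ by simpa using hs _ (hx y' hy')⟩

theorem of_rule {r : ContextFreeRule T g.NT} (hr : r ∈ g.rules)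
    (h : HasSubtree g f r.output w B x) : HasSubtree g f [.nonterminal r.input] w B x := by
  obtain ⟨hx, u, z, rfl, hs⟩ := h
  exact ⟨hx, u, z, rfl, fun x' hx' ↦ .of_rule hr (hs x' hx')⟩

theorem append_left {t : List (Symbol T g.NT)} (ht : Yields g f t u)
    (h : HasSubtree g f s w B x) : HasSubtree g f (t ++ s) (u ++ w) B x := by
  obtain ⟨hx, v, z, rfl, hs⟩ := h
  exact ⟨hx, u ++ v, z, by simp, fun x' hx' ↦ by simpa using ht.append (hs x' hx')⟩

theorem append_right {t : List (Symbol T g.NT)} (ht : Yields g f t u)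
    (h : HasSubtree g f s w B x) : HasSubtree g f (s ++ t) (w ++ u) B x := by
  obtain ⟨hx, v, z, rfl, hs⟩ := h
  exact ⟨hx, v, z ++ u, by simp, fun x' hx' ↦ by simpa using (hs x' hx').append ht⟩

theorem countP_le (h : HasSubtree g f s w B x) (p : α → Bool) : x.countP p ≤ w.countP p := by
  obtain ⟨-, u, z, rfl, -⟩ := h
  simp only [List.countP_append]
  lia

end HasSubtree

/-- `HasBranchingChain g f marked k A w`: some tree with root `A` and yield `w` has a chain of `k`
successive subtrees, each strictly inside the previous one and losing marked positions to its
surroundings. -/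
def HasBranchingChain (g : ContextFreeGrammar T) (f : α → T) (marked : α → Bool) (k : ℕ)
    (A : g.NT) (w : List α) : Prop :=
  ∃ l : List (g.NT × List α), l.length = k ∧
    (∀ p ∈ l, HasSubtree g f [.nonterminal A] w p.1 p.2) ∧
    l.Pairwise fun p q ↦
      HasSubtree g f [.nonterminal p.1] p.2 q.1 q.2 ∧ q.2.countP marked < p.2.countP marked

namespace HasBranchingChain

variable {g : ContextFreeGrammar T} {f : α → T} {marked : α → Bool} {k : ℕ} {w x : List α}
  {A B : g.NT}

theorem singleton (h : Yields g f [.nonterminal A] w) :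
    HasBranchingChain g f marked 1 A w :=
  ⟨[(A, w)], rfl, by simpa using .refl h, List.pairwise_singleton ..⟩

theorem of_hasSubtree (hB : HasSubtree g f [.nonterminal A] w B x)
    (h : HasBranchingChain g f marked k B x) : HasBranchingChain g f marked k A w := by
  obtain ⟨l, hlen, hl, hchain⟩ := h
  exact ⟨l, hlen, fun p hp ↦ hB.trans (hl p hp), hchain⟩

theorem cons (hA : Yields g f [.nonterminal A] w) (hB : HasSubtree g f [.nonterminal A] w B x)
    (hlt : x.countP marked < w.countP marked) (h : HasBranchingChain g f marked k B x) :
    HasBranchingChain g f marked (k + 1) A w := by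
  obtain ⟨l, rfl, hl, hchain⟩ := h
  have hsub : ∀ p ∈ l, HasSubtree g f [.nonterminal A] w p.1 p.2 := fun p hp ↦ hB.trans (hl p hp)
  refine ⟨(A, w) :: l, rfl, List.forall_mem_cons.2 ⟨.refl hA, hsub⟩, List.pairwise_cons.2
    ⟨fun p hp ↦ ⟨hsub p hp, ((hl p hp).countP_le marked).trans_lt hlt⟩, hchain⟩⟩

end HasBranchingChain

-- If one child's subtree carries all the marks, its chain already has the full length; otherwise
-- the root branches and is put in front of a chain shorter by one.
theorem HasBranchingChain.of_rule {g : ContextFreeGrammar T} {f : α → T} {marked : α → Bool}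
    {d : ℕ} {r : ContextFreeRule T g.NT} {w : List α} (hr : r ∈ g.rules)
    (hd : r.output.length ≤ d) (hw : Yields g f r.output w)
    (hheavy : ∀ m > 0, r.output.length * m < w.countP marked →
      ∃ B x, HasSubtree g f r.output w B x ∧ m < x.countP marked ∧
        ∀ n, d ^ n < x.countP marked → HasBranchingChain g f marked (n + 1) B x)
    (hd₀ : 0 < d) (n : ℕ) (hn : d ^ n < w.countP marked) :
    HasBranchingChain g f marked (n + 1) r.input w := by
  have hA := Yields.of_rule hr hw
  cases n with
  | zero => exact .singleton hA
  | succ n =>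
    have hlen : r.output.length * d ^ n < w.countP marked := calc
      r.output.length * d ^ n ≤ d * d ^ n := Nat.mul_le_mul_right _ hd
      _ = d ^ (n + 1) := (pow_succ' d n).symm
      _ < w.countP marked := hn
    obtain ⟨B, x, hB, hx, hchain⟩ := hheavy _ (pow_pos hd₀ n) hlen
    have hAB := hB.of_rule hr
    rcases (hAB.countP_le marked).lt_or_eq with hlt | heq
    · exact (hchain n hx).cons hA hAB hlt
    · exact (hchain (n + 1) (heq ▸ hn)).of_hasSubtree hAB

theorem Yields.exists_heavy_subtree {g : ContextFreeGrammar T} {f : α → T} {d : ℕ} (hd₀ : 0 < d)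
    (hd : ∀ r ∈ g.rules, r.output.length ≤ d) (marked : α → Bool)
    {s : List (Symbol T g.NT)} {w : List α} (h : Yields g f s w) :
    ∀ m > 0, s.length * m < w.countP marked →
      ∃ B x, HasSubtree g f s w B x ∧ m < x.countP marked ∧
        ∀ n, d ^ n < x.countP marked → HasBranchingChain g f marked (n + 1) B x := by
  induction h with
  | nil => simp
  | @terminal a s w _ ih =>
    intro m hm hlt
    have hle : (a :: w).countP marked ≤ w.countP marked + 1 := by
      rw [List.countP_cons]; split_ifs <;> lia
    obtain ⟨B, x, hB, hx⟩ := ih m hm (by rw [List.length_cons, add_one_mul] at hlt; lia)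
    exact ⟨B, x, hB.append_left (.terminal a .nil), hx⟩
  | @nonterminal r hr s u w hu hs ihu ihs =>
    intro m hm hlt
    by_cases hmu : m < u.countP marked
    · exact ⟨r.input, u, (HasSubtree.refl (.of_rule hr hu)).append_right hs, hmu,
        fun n ↦ .of_rule hr (hd r hr) hu ihu hd₀ n⟩
    · rw [List.length_cons, add_one_mul, List.countP_append] at hlt
      obtain ⟨B, x, hB, hx⟩ := ihs m hm (by lia)
      exact ⟨B, x, hB.append_left (.of_rule hr hu), hx⟩

theorem Yields.hasBranchingChain {g : ContextFreeGrammar T} {f : α → T} {d : ℕ} (hd₀ : 0 < d)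
    (hd : ∀ r ∈ g.rules, r.output.length ≤ d) {marked : α → Bool} {A : g.NT} {w : List α}
    (h : Yields g f [.nonterminal A] w) {n : ℕ} (hn : d ^ n < w.countP marked) :
    HasBranchingChain g f marked (n + 1) A w := by
  obtain ⟨B, x, hB, hx, hchain⟩ := h.exists_heavy_subtree hd₀ hd marked _ (pow_pos hd₀ n)
    (by simpa using hn)
  exact (hchain n hx).of_hasSubtree hB

-- Two subtrees of the chain have the same root and equally many excluded positions.
theorem HasBranchingChain.exists_pump {g : ContextFreeGrammar T} {f : α → T}
    {marked excluded : α → Bool} {C k : ℕ} {A : g.NT} {w : List α} [DecidableEq g.NT]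
    (h : HasBranchingChain g f marked k A w) (hC : w.countP excluded ≤ C)
    (hk : (g.rules.image ContextFreeRule.input).card * (C + 1) < k) :
    ∃ B x y, HasSubtree g f [.nonterminal A] w B x ∧ HasSubtree g f [.nonterminal B] x B y ∧
      y.countP marked < x.countP marked ∧ y.countP excluded = x.countP excluded := by
  obtain ⟨l, rfl, hl, hchain⟩ := h
  by_contra! hno
  let label : g.NT × List α → g.NT × ℕ := fun p ↦ (p.1, p.2.countP excluded)
  have hnodup : (l.map label).Nodup := by
    refine List.pairwise_map.2 (hchain.imp_of_mem fun {p q} hp _ hpq heq ↦ ?_)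
    obtain ⟨hroot, hcount⟩ := Prod.mk.inj heq
    refine hno p.1 p.2 q.2 (hl p hp) ?_ hpq.2 hcount.symm
    simpa only [hroot] using hpq.1
  have hsub : (l.map label).toFinset ⊆
      g.rules.image ContextFreeRule.input ×ˢ Finset.range (C + 1) := by
    intro c hc
    obtain ⟨⟨B, x⟩, hp, rfl⟩ := List.mem_map.1 (List.mem_toFinset.1 hc)
    have hB := hl _ hp
    refine Finset.mem_product.2 ⟨?_, Finset.mem_range_succ_iff.2 ((hB.countP_le _).trans hC)⟩
    cases hB.1 with
    | nonterminal hr => exact Finset.mem_image_of_mem _ hr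
  have hcard := Finset.card_le_card hsub
  rw [List.toFinset_card_of_nodup hnodup, List.length_map, Finset.card_product,
    Finset.card_range] at hcard
  exact hcard.not_gt hk

theorem HasSubtree.exists_iterate {g : ContextFreeGrammar T} {f : α → T} {B : g.NT}
    {x y : List α} (h : HasSubtree g f [.nonterminal B] x B y) :
    ∃ u v, x = u ++ y ++ v ∧ ∀ i, Yields g f [.nonterminal B]
      ((List.replicate i u).flatten ++ y ++ (List.replicate i v).flatten) := by
  obtain ⟨hy, u, v, rfl, hgraft⟩ := h
  refine ⟨u, v, rfl, fun i ↦ ?_⟩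
  induction i with
  | zero => simpa using hy
  | succ i ih =>
    rw [List.replicate_succ, List.replicate_succ', List.flatten_cons, List.flatten_concat]
    simpa only [List.append_assoc] using hgraft _ ih

/-- Ogden's lemma with excluded positions (Bader and Moura). -/
theorem exists_pump_of_isContextFree {L : Language T} (hL : L.IsContextFree) (f : α → T)
    (marked excluded : α → Bool) (C : ℕ) :
    ∃ N, ∀ w : List α, w.map f ∈ L → w.countP excluded ≤ C → N < w.countP marked →
      ∃ u v x y z, w = u ++ v ++ x ++ y ++ z ∧ 0 < v.countP marked + y.countP marked ∧
        v.countP excluded = 0 ∧ y.countP excluded = 0 ∧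
        ∀ i, (u ++ (List.replicate i v).flatten ++ x ++ (List.replicate i y).flatten ++ z).map f
          ∈ L := by
  classical
  obtain ⟨g, rfl⟩ := hL
  let d := g.rules.sup (fun r ↦ r.output.length) + 1
  have hd : ∀ r ∈ g.rules, r.output.length ≤ d := fun r hr ↦
    (Finset.le_sup (f := fun r ↦ r.output.length) hr).trans (Nat.le_succ _)
  refine ⟨d ^ ((g.rules.image ContextFreeRule.input).card * (C + 1)), fun w hw hexcl hmark ↦ ?_⟩
  have htree := Yields.iff_map_mem_language.2 hw
  obtain ⟨B, t, x, ht, hx, hlt, heq⟩ :=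
    (htree.hasBranchingChain (Nat.succ_pos _) hd hmark).exists_pump hexcl (Nat.lt_succ_self _)
  obtain ⟨v, y, rfl, hiter⟩ := hx.exists_iterate
  obtain ⟨-, u, z, rfl, hgraft⟩ := ht
  simp only [List.countP_append] at hlt heq
  refine ⟨u, v, x, y, z, by simp only [List.append_assoc], by lia, by lia, by lia, fun i ↦ ?_⟩
  simpa only [List.append_assoc] using Yields.iff_map_mem_language.1 (hgraft _ (hiter i))

end ParseTrees

section BlockWords

theorem pairwise_append_of_subset {ι : Type*} {r : ι → ι → Prop} {u v v' z : List ι}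
    (h : (u ++ v ++ z).Pairwise r) (hv' : v'.Pairwise r) (hsub : v' ⊆ v) :
    (u ++ v' ++ z).Pairwise r := by
  simp only [List.pairwise_append, List.mem_append] at h ⊢
  obtain ⟨⟨hu, -, huv⟩, hz, huvz⟩ := h
  exact ⟨⟨hu, hv', fun a ha b hb ↦ huv a ha b (hsub hb)⟩, hz,
    fun a ha b hb ↦ huvz a (ha.imp_right (hsub ·)) b hb⟩

theorem pairwise_le_pump {ι : Type*} [Preorder ι] {u v z : List ι}
    (h : (u ++ v ++ z).Pairwise (· ≤ ·)) (hv : ∀ a ∈ v, ∀ b ∈ v, a = b) (i : ℕ) :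
    (u ++ (List.replicate i v).flatten ++ z).Pairwise (· ≤ ·) := by
  have hsub : (List.replicate i v).flatten ⊆ v := fun a ha ↦ by
    obtain ⟨_, hl, ha⟩ := List.mem_flatten.1 ha
    rwa [← List.eq_of_mem_replicate hl]
  exact pairwise_append_of_subset h
    (List.pairwise_of_forall_mem_list fun a ha b hb ↦ (hv a (hsub ha) b (hsub hb)).le) hsub

theorem eq_of_mem_of_separated {ι : Type*} [LinearOrder ι] {u v z : List ι}
    (h : (u ++ v ++ z).Pairwise (· ≤ ·))
    (hsep : ∀ a ∈ v, ∀ b ∈ v, a < b → ∃ c ∈ u ++ v ++ z, c ∉ v ∧ a < c ∧ c < b) :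
    ∀ a ∈ v, ∀ b ∈ v, a = b := by
  have hnot_lt : ∀ a ∈ v, ∀ b ∈ v, ¬ a < b := by
    intro a ha b hb hab
    obtain ⟨c, hc, hcv, hac, hcb⟩ := hsep a ha b hb hab
    simp only [List.pairwise_append, List.mem_append] at h hc
    obtain ⟨⟨-, -, huv⟩, -, huvz⟩ := h
    rcases hc with (hcu | hcv') | hcz
    · exact (huv c hcu a ha).not_gt hac
    · exact hcv hcv'
    · exact (huvz b (.inr hb) c hcz).not_gt hcb
  exact fun a ha b hb ↦ le_antisymm (not_lt.1 (hnot_lt b hb a ha)) (not_lt.1 (hnot_lt a ha b hb))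

variable {k : ℕ}

/-- The word `0^(n 0) 1^(n 1) ⋯ (k-1)^(n (k-1))` over the alphabet `Fin k`. -/
def blocks (n : Fin k → ℕ) : List (Fin k) :=
  (List.finRange k).flatMap fun j ↦ List.replicate (n j) j

theorem pairwise_blocks (n : Fin k → ℕ) : (blocks n).Pairwise (· ≤ ·) := by
  refine List.pairwise_flatMap.2 ⟨fun j _ ↦ List.pairwise_replicate.2 (.inr le_rfl), ?_⟩
  refine (List.pairwise_le_finRange k).imp fun {i j} hij a ha b hb ↦ ?_
  rwa [List.eq_of_mem_replicate ha, List.eq_of_mem_replicate hb]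

theorem countP_blocks (n : Fin k → ℕ) (p : Fin k → Bool) :
    (blocks n).countP p = ∑ j with p j, n j := by
  simp [blocks, List.countP_flatMap, Function.comp_def, List.countP_replicate,
    Finset.sum_filter, Fin.sum_univ_def]

theorem count_blocks (n : Fin k → ℕ) (j : Fin k) : (blocks n).count j = n j := by
  rw [List.count, countP_blocks]
  simp [Finset.filter_eq']

theorem mem_blocks {n : Fin k → ℕ} {j : Fin k} : j ∈ blocks n ↔ n j ≠ 0 := by
  rw [← List.count_pos_iff, count_blocks, Nat.pos_iff_ne_zero]

theorem eq_blocks_of_pairwise {w : List (Fin k)} (hw : w.Pairwise (· ≤ ·)) {n : Fin k → ℕ}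
    (hn : ∀ j, w.count j = n j) : w = blocks n :=
  List.Perm.eq_of_pairwise (fun _ _ _ _ ↦ le_antisymm) hw (pairwise_blocks n)
    (List.perm_iff_count.2 fun j ↦ (hn j).trans (count_blocks n j).symm)

theorem pump_blocks {n : Fin k → ℕ} {u v x y z : List (Fin k)}
    (h : blocks n = u ++ v ++ x ++ y ++ z) (hv : ∀ a ∈ v, ∀ b ∈ v, a = b)
    (hy : ∀ a ∈ y, ∀ b ∈ y, a = b) (i : ℕ) :
    u ++ (List.replicate (i + 1) v).flatten ++ x ++ (List.replicate (i + 1) y).flatten ++ z =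
      blocks (n + i • fun j ↦ v.count j + y.count j) := by
  have hsorted := pairwise_blocks n
  rw [h] at hsorted
  refine eq_blocks_of_pairwise ?_ fun j ↦ ?_
  · have hv' := pairwise_le_pump (z := x ++ y ++ z) (by simpa using hsorted) hv (i + 1)
    exact pairwise_le_pump (by simpa using hv') hy (i + 1)
  · have hj : n j = u.count j + v.count j + x.count j + y.count j + z.count j := by
      rw [← count_blocks n j, h]
      simp only [List.count_append]
    simp only [List.count_append, List.count_flatten, List.map_replicate, List.sum_replicate,
      smul_eq_mul, Pi.add_apply, Pi.smul_apply, hj]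
    ring

-- A pumped factor avoids the excluded blocks, which separate the others, so it lies in one block.
theorem exists_pump_blocks_of_isContextFree {T : Type*} {L : Language T} (hL : L.IsContextFree)
    (f : Fin k → T) {R : Finset (Fin k)}
    (hsep : ∀ i ∉ R, ∀ j ∉ R, i < j → ∃ s ∈ R, i < s ∧ s < j) (m : Fin k) (C : ℕ) :
    ∃ N, ∀ n : Fin k → ℕ, (blocks n).map f ∈ L → (∀ j ∈ R, n j ≠ 0) → ∑ j ∈ R, n j ≤ C →
      N < n m → ∃ e : Fin k → ℕ, e ≤ n ∧ 0 < e m ∧ (∀ j ∈ R, e j = 0) ∧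
        {j | j ≠ m ∧ e j ≠ 0}.Subsingleton ∧ ∀ i : ℕ, (blocks (n + i • e)).map f ∈ L := by
  obtain ⟨N, hN⟩ := exists_pump_of_isContextFree hL f (· == m) (· ∈ R) C
  refine ⟨N, fun n hn hR₀ hR hm ↦ ?_⟩
  obtain ⟨u, v, x, y, z, hw, hpos, hvR, hyR, hpump⟩ := hN (blocks n) hn
    (by simpa [countP_blocks] using hR) (hm.trans_eq (count_blocks n m).symm)
  replace hvR : ∀ j ∈ v, j ∉ R := by simpa [List.countP_eq_zero] using hvR
  replace hyR : ∀ j ∈ y, j ∉ R := by simpa [List.countP_eq_zero] using hyR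
  have hconst : ∀ p t q : List (Fin k), blocks n = p ++ t ++ q → (∀ j ∈ t, j ∉ R) →
      ∀ a ∈ t, ∀ b ∈ t, a = b := by
    intro p t q hptq htR
    refine eq_of_mem_of_separated (hptq ▸ pairwise_blocks n) fun a ha b hb hab ↦ ?_
    obtain ⟨s, hs, hlt⟩ := hsep a (htR a ha) b (htR b hb) hab
    exact ⟨s, hptq ▸ mem_blocks.2 (hR₀ s hs), fun hst ↦ htR s hst hs, hlt⟩
  have hv := hconst u v (x ++ y ++ z) (by simpa using hw) hvR
  have hy := hconst (u ++ v ++ x) y z hw hyR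
  have hsupp : ∀ j, v.count j + y.count j ≠ 0 ↔ j ∈ v ∨ j ∈ y := fun j ↦ by
    simp only [← List.count_pos_iff]
    lia
  refine ⟨fun j ↦ v.count j + y.count j, fun j ↦ ?_, hpos, fun j hj ↦ ?_, ?_, fun i ↦ ?_⟩
  · rw [← count_blocks n j, hw]
    simp only [List.count_append]
    lia
  · by_contra hne
    exact ((hsupp j).1 hne).elim (fun hjv ↦ hvR j hjv hj) (fun hjy ↦ hyR j hjy hj)
  · rintro i ⟨him, hi⟩ j ⟨hjm, hj⟩
    have hm := (hsupp m).1 hpos.ne'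
    rw [hsupp] at hi hj
    grind
  · rw [← pump_blocks hw hv hy i]
    exact hpump (i + 1)

end BlockWords

section UniqueReadability

theorem replicate_append_inj {β : Type*} {a : β} {n m : ℕ} {s t : List β}
    (hs : s.head? ≠ some a) (ht : t.head? ≠ some a)
    (h : List.replicate n a ++ s = List.replicate m a ++ t) : n = m ∧ s = t := by
  induction n generalizing m with
  | zero => cases m with
    | zero => exact ⟨rfl, h⟩
    | succ m => simp [show s = _ from h, List.replicate_succ] at hs
  | succ n ih => cases m with
    | zero => simp [← show _ = t from h, List.replicate_succ] at ht
    | succ m => simpa using ih (List.cons.inj h).2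

theorem varStr_append_inj {x y : ℕ} {s t : List Alph} (hs : s.head? ≠ some .prime)
    (ht : t.head? ≠ some .prime) (h : varStr x ++ s = varStr y ++ t) : x = y ∧ s = t :=
  replicate_append_inj hs ht (List.cons.inj h).2

theorem varStr_append_append_inj {x x' y y' : ℕ} {p q : Alph} {s t : List Alph}
    (hp : p ≠ .prime) (hq : q ≠ .prime) (hs : s.head? ≠ some .prime) (ht : t.head? ≠ some .prime)
    (h : varStr x ++ p :: (varStr y ++ s) = varStr x' ++ q :: (varStr y' ++ t)) :
    x = x' ∧ p = q ∧ y = y' ∧ s = t := by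
  obtain ⟨hx, hpq⟩ := varStr_append_inj (by simpa) (by simpa) h
  obtain ⟨hpq, hyst⟩ := List.cons.inj hpq
  exact ⟨hx, hpq, varStr_append_inj hs ht hyst⟩

namespace Fm

theorem head?_str_append_ne_all (φ : Fm) (s : List Alph) : (φ.str ++ s).head? ≠ some .all := by
  cases φ <;> simp [str, varStr]

theorem str_append_inj {φ ψ : Fm} {s t : List Alph} (hs : s.head? ≠ some .prime)
    (ht : t.head? ≠ some .prime) (h : φ.str ++ s = ψ.str ++ t) : φ = ψ ∧ s = t := by
  induction φ generalizing ψ s t with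
  | bot => cases ψ <;> simp_all [str, varStr]
  | eq x y =>
    cases ψ <;> simp only [str, List.append_assoc, List.cons_append, List.nil_append] at h
    case eq | mem =>
      have := varStr_append_append_inj (by decide) (by decide) hs ht h
      simp_all
    all_goals simp [varStr] at h
  | mem x y =>
    cases ψ <;> simp only [str, List.append_assoc, List.cons_append, List.nil_append] at h
    case eq | mem =>
      have := varStr_append_append_inj (by decide) (by decide) hs ht h
      simp_all
    all_goals simp [varStr] at h
  | imp φ₁ φ₂ ih₁ ih₂ =>
    cases ψ <;> simp only [str, List.append_assoc, List.cons_append, List.nil_append,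
      List.cons.injEq, true_and] at h
    case imp ψ₁ ψ₂ =>
      obtain ⟨rfl, hψ₂⟩ := ih₁ (by simp) (by simp) h
      obtain ⟨rfl, hst⟩ := ih₂ (by simp) (by simp) (List.cons.inj hψ₂).2
      exact ⟨rfl, (List.cons.inj hst).2⟩
    case all => exact absurd (congrArg List.head? h) (head?_str_append_ne_all φ₁ _)
    all_goals simp [varStr] at h
  | all x φ ih =>
    cases ψ <;> simp only [str, List.append_assoc, List.cons_append, List.nil_append,
      List.cons.injEq, true_and] at h
    case all x' ψ =>
      obtain ⟨rfl, hψ⟩ := varStr_append_inj (by simp) (by simp) h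
      obtain ⟨rfl, rfl⟩ := ih hs ht (List.cons.inj hψ).2
      exact ⟨rfl, rfl⟩
    case imp ψ₁ ψ₂ =>
      exact absurd (congrArg List.head? h.symm) (head?_str_append_ne_all ψ₁ _)
    all_goals simp [varStr] at h

theorem str_injective : Function.Injective str := fun φ ψ h ↦
  (str_append_inj (s := []) (t := []) (by simp) (by simp) (by simpa using h)).1

end Fm

end UniqueReadability

section TestFormulae

/-- The formula `[w ∈ a → [w ≐ c → w ∈ b]]`, the variables being given by their numbers of primes;
`w` must lie one level below `a` and `b` and on the level of `c`. -/
def testFm (a c b : ℕ) : Fm :=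
  .imp (.mem 0 a) (.imp (.eq 0 c) (.mem 0 b))

theorem testFm_stratified_iff {a c b : ℕ} :
    (testFm a c b).Stratified ↔ a ≠ 0 ∧ b ≠ 0 ∧ a ≠ c ∧ b ≠ c := by
  simp only [Fm.Stratified, testFm, Fm.memPairs, Fm.eqPairs, Finset.mem_union,
    Finset.mem_singleton, Finset.notMem_empty, false_or, or_false, forall_eq_or_imp, forall_eq]
  constructor
  · rintro ⟨σ, ⟨ha, hb⟩, hc⟩
    refine ⟨?_, ?_, ?_, ?_⟩ <;> rintro rfl <;> lia
  · rintro ⟨ha, hb, hac, hbc⟩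
    exact ⟨fun x ↦ if x = a ∨ x = b then 1 else 0, by simp [ha.symm, hb.symm],
      by simp [ha.symm, hb.symm, hac.symm, hbc.symm]⟩

/-- The symbols of `testFm a c b`, each of the three runs of primes (at the indices 4, 10 and 15)
being represented by a single prime. -/
def testTemplate : Fin 18 → Alph :=
  ![.lb, .w, .mem, .w, .prime, .imp, .lb, .w, .deq, .w, .prime, .imp, .w, .mem, .w, .prime, .rb,
    .rb]

/-- The indices of `testTemplate` outside the runs of primes. -/
def fixedIndices : Finset (Fin 18) := {4, 10, 15}ᶜ

theorem map_testTemplate_blocks {n : Fin 18 → ℕ} (hn : ∀ j ∈ fixedIndices, n j = 1) :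
    (blocks n).map testTemplate = (testFm (n 4) (n 10) (n 15)).str := by
  have hrange : List.finRange 18 =
      [0, 1, 2, 3, 4, 5, 6, 7, 8, 9, 10, 11, 12, 13, 14, 15, 16, 17] := by decide
  have hone : ∀ j, j ≠ 4 → j ≠ 10 → j ≠ 15 → n j = 1 := fun j h₄ h₁₀ h₁₅ ↦
    hn j (by simp [fixedIndices, h₄, h₁₀, h₁₅])
  simp [blocks, hrange, hone, testTemplate, testFm, Fm.str, varStr]

theorem exists_fixedIndex_between :
    ∀ i ∉ fixedIndices, ∀ j ∉ fixedIndices, i < j → ∃ s ∈ fixedIndices, i < s ∧ s < j := by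
  decide

theorem exists_pump_testFm_of_isContextFree {L : Language Alph} (hL : L.IsContextFree) :
    ∃ N, ∀ a c b, (testFm a c b).str ∈ L → N < c →
      ∃ p q r, 0 < q ∧ q ≤ c ∧ (p = 0 ∨ r = 0) ∧
        ∀ i, (testFm (a + i * p) (c + i * q) (b + i * r)).str ∈ L := by
  obtain ⟨N, hN⟩ :=
    exists_pump_blocks_of_isContextFree hL testTemplate exists_fixedIndex_between 10 15
  refine ⟨N, fun a c b hmem hc ↦ ?_⟩
  let n : Fin 18 → ℕ := fun j ↦
    if j ∈ fixedIndices then 1 else if j = 4 then a else if j = 10 then c else b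
  have hn : ∀ j ∈ fixedIndices, n j = 1 := fun j hj ↦ if_pos hj
  obtain ⟨e, hle, hpos, hfixed, hsub, hpump⟩ := hN n (map_testTemplate_blocks hn ▸ hmem)
    (fun j hj ↦ by simp [hn j hj]) (by rw [Finset.sum_congr rfl hn]; rfl) hc
  refine ⟨e 4, e 10, e 15, hpos, hle 10, ?_, fun i ↦ ?_⟩
  · by_contra! h
    exact absurd (hsub ⟨by decide, h.1⟩ ⟨by decide, h.2⟩) (by decide : (4 : Fin 18) ≠ 15)
  · have hblocks := map_testTemplate_blocks (n := n + i • e) fun j hj ↦ by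
      simp [hn j hj, hfixed j hj]
    exact hblocks ▸ hpump i

end TestFormulae

/-- The language of stratified formulae of set theory is not context-free. -/
theorem stratified_not_contextFree :
    ¬ Language.IsContextFree {s : List Alph | ∃ φ : Fm, φ.Stratified ∧ φ.str = s} := by
  intro hL
  obtain ⟨N, hN⟩ := exists_pump_testFm_of_isContextFree hL
  let c := N + 1
  let a := c + c.factorial
  have hstrat : (testFm a c a).Stratified := by
    have := c.factorial_pos
    exact testFm_stratified_iff.2 (by lia)
  obtain ⟨p, q, r, hq, hqc, hpr, hpump⟩ := hN a c a ⟨_, hstrat, rfl⟩ (Nat.lt_succ_self N)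
  obtain ⟨i, hi⟩ : q ∣ c.factorial := Nat.dvd_factorial hq hqc
  have hc : c + i * q = a := by rw [mul_comm, ← hi]
  obtain ⟨φ, hφ, hstr⟩ := hpump i
  rw [Fm.str_injective hstr, testFm_stratified_iff, hc] at hφ
  obtain ⟨-, -, hleft, hright⟩ := hφ
  rcases hpr with rfl | rfl
  · exact hleft (by simp)
  · exact hright (by simp)
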